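/- Z is a minimum set satisfying the graphical adjustment criterion for A,Y,L,N in G (it satisfies the criterion and no set of strictly smaller cardinality does) if and only if Z is a minimum A–Y cut in H^1 (an A–Y cut such that no A–Y cut has strictly smaller cardinality). -/

import Mathlib

open Relation Set

namespace CausalGraph

variable {V : Type*} [Fintype V] [DecidableEq V]

/-- `p` is a path in the undirected sense from `u` to `v` along adjacency `Adj`:
a nonempty list of pairwise distinct vertices, consecutive ones adjacent,
starting at `u` and ending at `v`. -/
def IsPath (Adj : V → V → Prop) (u v : V) (p : List V) : Prop :=
  List.Chain' Adj p ∧ p.head? = some u ∧ p.getLast? = some v ∧ p.Nodup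

/-- Ancestors of `S` in the digraph `D` (every vertex is an ancestor of itself). -/
def anc (D : V → V → Prop) (S : Set V) : Set V :=
  {u | ∃ v ∈ S, Relation.ReflTransGen D u v}

/-- Descendants of `S` in the digraph `D` (every vertex is a descendant of itself). -/
def desc (D : V → V → Prop) (S : Set V) : Set V :=
  {u | ∃ v ∈ S, Relation.ReflTransGen D v u}

/-- Parents of vertices of `S` in the digraph `D`. -/
def parents (D : V → V → Prop) (S : Set V) : Set V :=
  {u | ∃ v ∈ S, D u v}

/-- The digraph `D` is acyclic. -/
def Acyclic (D : V → V → Prop) : Prop :=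
  ∀ u v, D u v → ¬ Relation.ReflTransGen D v u

/-- Vertices other than `A` lying on a directed path from `A` to `Y`. -/
def cn (D : V → V → Prop) (A Y : V) : Set V :=
  {v | v ≠ A ∧ Relation.ReflTransGen D A v ∧ Relation.ReflTransGen D v Y}

/-- The forbidden set. -/
def forb (D : V → V → Prop) (A Y : V) : Set V :=
  desc D (cn D A Y) ∪ {A}

/-- Proper back-door graph: delete every edge from `A` into `cn D A Y`. -/
def pbd (D : V → V → Prop) (A Y : V) : V → V → Prop :=
  fun u v => D u v ∧ ¬(u = A ∧ v ∈ cn D A Y)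

/-- `y` is an interior vertex of the list `p` with neighbours `x` and `z` on the path. -/
def InteriorAt (p : List V) (x y z : V) : Prop :=
  ∃ s t : List V, p = s ++ x :: y :: z :: t

/-- The path `p` is blocked by `Z` in the digraph `D`: some interior non-collider
lies in `Z`, or some interior collider has no descendant in `Z`. -/
def Blocked (D : V → V → Prop) (Z : Set V) (p : List V) : Prop :=
  (∃ x y z, InteriorAt p x y z ∧ ¬(D x y ∧ D z y) ∧ y ∈ Z) ∨
  (∃ x y z, InteriorAt p x y z ∧ (D x y ∧ D z y) ∧ ∀ d ∈ desc D {y}, d ∉ Z)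

/-- d-separation of `S` and `T` given `Z` in the digraph `D`. -/
def DSep (D : V → V → Prop) (S T Z : Set V) : Prop :=
  ∀ s ∈ S, ∀ t ∈ T, ∀ p : List V,
    IsPath (fun a b => D a b ∨ D b a) s t p → Blocked D Z p

/-- Moral graph of the subgraph of the digraph `D` induced on `Vs`. -/
def moral (D : V → V → Prop) (Vs : Set V) : SimpleGraph V :=
  SimpleGraph.fromRel (fun u v =>
    u ∈ Vs ∧ v ∈ Vs ∧ (D u v ∨ D v u ∨ ∃ w ∈ Vs, D u w ∧ D v w))

/-- Separation in an undirected graph: every path from `S` to `T` meets `W`. -/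
def USep (H : SimpleGraph V) (S T W : Set V) : Prop :=
  ∀ s ∈ S, ∀ t ∈ T, ∀ p : List V, IsPath H.Adj s t p → ∃ z ∈ W, z ∈ p

/-- `Z` is an `A`–`Y` cut in an undirected graph `H` with vertex set `Vs`. -/
def IsCut (Vs : Set V) (H : SimpleGraph V) (A Y : V) (Z : Set V) : Prop :=
  Z ⊆ Vs ∧ Z ∩ {A, Y} = ∅ ∧ ∀ p : List V, IsPath H.Adj A Y p → ∃ z ∈ Z, z ∈ p

def MinimalCut (Vs : Set V) (H : SimpleGraph V) (A Y : V) (Z : Set V) : Prop :=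
  IsCut Vs H A Y Z ∧ ∀ Z' ⊂ Z, ¬ IsCut Vs H A Y Z'

def MinimumCut (Vs : Set V) (H : SimpleGraph V) (A Y : V) (Z : Set V) : Prop :=
  IsCut Vs H A Y Z ∧ ∀ Z', IsCut Vs H A Y Z' → Z.ncard ≤ Z'.ncard

/-- Connected component of `y` in `H` restricted to the complement of `U`:
vertices reachable from `y` by paths avoiding `U`. -/
def cc (H : SimpleGraph V) (U : Set V) (y : V) : Set V :=
  {w | ∃ p : List V, IsPath H.Adj y w p ∧ ∀ x ∈ p, x ∉ U}

/-- Boundary of `S` in `H`: vertices outside `S` adjacent to some vertex of `S`. -/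
def bdry (H : SimpleGraph V) (S : Set V) : Set V :=
  {v | v ∉ S ∧ ∃ u ∈ S, H.Adj v u}

/-- The partial order `Z₁ ⊴_H Z₂` between `A`–`Y` cuts. -/
def TLE (H : SimpleGraph V) (A Y : V) (Z₁ Z₂ : Set V) : Prop :=
  USep H {Y} (Z₂ \ Z₁) Z₁ ∧ USep H {A} (Z₁ \ Z₂) Z₂

/-- Ancestors of `{A, Y} ∪ L`. -/
def ancAYL (D : V → V → Prop) (A Y : V) (L : Set V) : Set V :=
  anc D ({A, Y} ∪ L)

/-- The moral graph `H⁰` of the proper back-door graph induced on `an_G({A,Y} ∪ L)`. -/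
def H0 (D : V → V → Prop) (A Y : V) (L : Set V) : SimpleGraph V :=
  moral (pbd D A Y) (ancAYL D A Y L)

/-- The set of vertices removed from `H⁰` when constructing `H¹`. -/
def Ignore (D : V → V → Prop) (A Y : V) (L N : Set V) : Set V :=
  (ancAYL D A Y L \ {A, Y}) ∩ ((Set.univ \ N) ∪ forb D A Y)

/-- Vertex set of `H¹`. -/
def H1verts (D : V → V → Prop) (A Y : V) (L N : Set V) : Set V :=
  ancAYL D A Y L \ Ignore D A Y L N

/-- The non-parametric adjustment efficiency graph `H¹`: delete the vertices of
`Ignore`, join two remaining vertices if they are joined in `H⁰` by a path all of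
whose intermediate vertices are in `Ignore`, and join `A` and `Y` to every vertex
of `L`. -/
def H1 (D : V → V → Prop) (A Y : V) (L N : Set V) : SimpleGraph V :=
  SimpleGraph.fromRel (fun u v =>
    u ∈ H1verts D A Y L N ∧ v ∈ H1verts D A Y L N ∧
      ((∃ p : List V, IsPath (H0 D A Y L).Adj u v p ∧
          ∀ x ∈ p, x ≠ u → x ≠ v → x ∈ Ignore D A Y L N) ∨
        (u = A ∧ v ∈ L) ∨ (u = Y ∧ v ∈ L)))

/-- The graphical adjustment criterion for `A, Y, L, N` in the DAG `D`. -/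
def GAC (D : V → V → Prop) (A Y : V) (L N Z : Set V) : Prop :=
  DSep (pbd D A Y) {A} {Y} Z ∧ Z ∩ forb D A Y = ∅ ∧ L ⊆ Z ∧ Z ⊆ N

def MinimalGAC (D : V → V → Prop) (A Y : V) (L N Z : Set V) : Prop :=
  GAC D A Y L N Z ∧ ∀ Z' ⊂ Z, ¬ GAC D A Y L N Z'

def MinimumGAC (D : V → V → Prop) (A Y : V) (L N Z : Set V) : Prop :=
  GAC D A Y L N Z ∧ ∀ Z', GAC D A Y L N Z' → Z.ncard ≤ Z'.ncard

/-- Graphical admissibility of the pair `(L, N)`. -/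
def Admissible (D : V → V → Prop) (A Y : V) (L N : Set V) : Prop :=
  ∃ Z, GAC D A Y L N Z

end CausalGraph

namespace CausalGraph

/-!
A path left open by `Z` stays among the ancestors of its endpoints and of `Z`, and skipping its
colliders in `Z` turns it into a path of the moral graph avoiding `Z`. Conversely, a path of the
moral graph avoiding `Z` is lifted one edge at a time, starting from its end: at each stage the
current vertex is joined to the target by an open path, and either the next vertex can be put in
front of it or it already lies on it, so that a suffix will do. Hence `d`-separation is separation
in the moral graph of the ancestral set.

On the undirected side, contracting the ignored vertices does not affect separation by sets of
remaining vertices, and the edges from `A` and `Y` to `L` force `L` into every cut. So the cuts of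
`H¹` are exactly the adjustment sets contained in the ancestral set and missing `Y`. Intersecting
an arbitrary adjustment set with these vertices leaves an adjustment set, so the minimum sizes
agree.
-/

section Path

variable {V : Type*} {R : V → V → Prop} {P : Set V} {u v w : V} {p s t : List V}

theorem isPath_singleton : IsPath R v v [v] :=
  ⟨.singleton v, rfl, rfl, List.nodup_singleton v⟩

theorem isPath_cons_cons :
    IsPath R u w (u :: v :: t) ↔ R u v ∧ u ∉ v :: t ∧ IsPath R v w (v :: t) := by
  constructor
  · rintro ⟨hc, -, hl, hn⟩
    obtain ⟨huv, hvt⟩ := List.isChain_cons_cons.1 hc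
    exact ⟨huv, (List.nodup_cons.1 hn).1, hvt, rfl, hl, (List.nodup_cons.1 hn).2⟩
  · rintro ⟨huv, hu, hvt, -, hl, hn⟩
    exact ⟨List.isChain_cons_cons.2 ⟨huv, hvt⟩, rfl, hl, List.nodup_cons.2 ⟨hu, hn⟩⟩

theorem IsPath.exists_eq_cons (h : IsPath R u w p) : ∃ t, p = u :: t :=
  ⟨p.tail, List.eq_cons_of_mem_head? h.2.1⟩

@[elab_as_elim]
theorem IsPath.induction {motive : (u : V) → (p : List V) → IsPath R u w p → Prop}
    (singleton : motive w [w] isPath_singleton)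
    (cons : ∀ {u v : V} {t : List V} (h : IsPath R u w (u :: v :: t))
      (hv : IsPath R v w (v :: t)), R u v → motive v (v :: t) hv → motive u (u :: v :: t) h)
    (h : IsPath R u w p) : motive u p h := by
  induction p generalizing u with
  | nil => exact absurd h.2.1 (by simp)
  | cons a t ih =>
    obtain rfl : a = u := by simpa using h.2.1
    cases t with
    | nil =>
      obtain rfl : a = w := by simpa using h.2.2.1
      exact singleton
    | cons b t =>
      obtain ⟨hab, -, hb⟩ := isPath_cons_cons.1 h
      exact cons h hb hab (ih hb)

theorem IsPath.of_append (h : IsPath R u w (s ++ v :: t)) : IsPath R v w (v :: t) :=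
  ⟨h.1.right_of_append, rfl, by simpa [List.getLast?_append] using h.2.2.1,
    h.2.2.2.of_append_right⟩

theorem IsPath.exists_adj (h : IsPath R u w p) (huw : u ≠ w) : (∃ a, R u a) ∧ ∃ b, R b w := by
  induction h using IsPath.induction with
  | singleton => exact absurd rfl huw
  | @cons u v _ _ _ huv ih =>
    refine ⟨⟨v, huv⟩, ?_⟩
    by_cases hvw : v = w
    · exact ⟨u, hvw ▸ huv⟩
    · exact (ih hvw).2

/-- The restriction of the relation `R` to the set `P`. Its reflexive transitive closure expresses
that two points of `P` are joined by a path inside `P`. -/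
def Within (R : V → V → Prop) (P : Set V) (a b : V) : Prop :=
  R a b ∧ a ∈ P ∧ b ∈ P

theorem Within.mono {Q : Set V} (hPQ : P ⊆ Q) {a b : V} (h : Within R P a b) : Within R Q a b :=
  ⟨h.1, hPQ h.2.1, hPQ h.2.2⟩

theorem exists_isPath_iff_reflTransGen :
    (∃ p, IsPath R u w p ∧ ∀ x ∈ p, x ∈ P) ↔ u ∈ P ∧ ReflTransGen (Within R P) u w := by
  constructor
  · rintro ⟨p, hp, hP⟩
    induction hp using IsPath.induction with
    | singleton => exact ⟨hP w (by simp), .refl⟩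
    | @cons u v t _ _ huv ih =>
      obtain ⟨hv, hvw⟩ := ih fun x hx => hP x (List.mem_cons_of_mem u hx)
      have hu := hP u List.mem_cons_self
      exact ⟨hu, .head ⟨huv, hu, hv⟩ hvw⟩
  · rintro ⟨hu, h⟩
    induction h using ReflTransGen.head_induction_on with
    | refl => exact ⟨[w], isPath_singleton, by simpa using hu⟩
    | @head u v huv _ ih =>
      obtain ⟨p, hp, hP⟩ := ih huv.2.2
      by_cases hup : u ∈ p
      · obtain ⟨s, t, rfl⟩ := List.append_of_mem hup
        exact ⟨u :: t, hp.of_append, fun x hx => hP x (List.mem_append_right s hx)⟩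
      · obtain ⟨t, rfl⟩ := hp.exists_eq_cons
        exact ⟨u :: v :: t, isPath_cons_cons.2 ⟨huv.1, hup, hp⟩,
          List.forall_mem_cons.2 ⟨hu, hP⟩⟩

end Path

section OpenPath

variable {V : Type*} {D : V → V → Prop} {S T W Z Z' : Set V} {u v w x y z : V} {p s t : List V}

theorem subset_anc : S ⊆ anc D S :=
  fun v hv => ⟨v, hv, .refl⟩

theorem mem_anc_of_reflTransGen (h : ReflTransGen D u v) (hv : v ∈ anc D S) : u ∈ anc D S :=
  let ⟨s, hs, hvs⟩ := hv
  ⟨s, hs, h.trans hvs⟩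

theorem anc_subset_anc (h : S ⊆ anc D T) : anc D S ⊆ anc D T :=
  fun _ ⟨_, hv, huv⟩ => mem_anc_of_reflTransGen huv (h hv)

theorem InteriorAt.mem (h : InteriorAt p x y z) : y ∈ p := by
  obtain ⟨s, t, rfl⟩ := h
  simp

theorem interiorAt_cons_cons : InteriorAt (u :: v :: t) x y z ↔
    (u = x ∧ v = y ∧ z ∈ t.head?) ∨ InteriorAt (v :: t) x y z := by
  constructor
  · rintro ⟨_ | ⟨a, s⟩, t', h⟩
    · obtain ⟨rfl, rfl, rfl⟩ : u = x ∧ v = y ∧ t = z :: t' := by simpa using h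
      exact .inl ⟨rfl, rfl, rfl⟩
    · exact .inr ⟨s, t', (List.cons.inj h).2⟩
  · rintro (⟨rfl, rfl, hz⟩ | ⟨s, t', h⟩)
    · exact ⟨[], t.tail, by rw [List.nil_append, ← List.eq_cons_of_mem_head? hz]⟩
    · exact ⟨u :: s, t', by rw [h, List.cons_append]⟩

theorem InteriorAt.append_left (h : InteriorAt p x y z) : InteriorAt (s ++ p) x y z := by
  obtain ⟨s', t, rfl⟩ := h
  exact ⟨s ++ s', t, by rw [List.append_assoc]⟩

theorem exists_interiorAt_append (hs : s ≠ []) (hz : z ∈ t.head?) :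
    ∃ x, InteriorAt (s ++ y :: t) x y z := by
  refine ⟨s.getLast hs, s.dropLast, t.tail, ?_⟩
  rw [← List.eq_cons_of_mem_head? hz]
  conv_lhs => rw [← List.dropLast_append_getLast hs]
  simp

theorem IsPath.ne_of_interiorAt {R : V → V → Prop} (h : IsPath R u w p)
    (hy : InteriorAt p x y z) : y ≠ w := by
  rintro rfl
  obtain ⟨s, t, rfl⟩ := hy
  have hlast : y ∈ (z :: t).getLast? := by simpa [List.getLast?_append] using h.2.2.1
  have hnodup : (y :: z :: t).Nodup := (List.nodup_cons.1 h.2.2.2.of_append_right).2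
  exact (List.nodup_cons.1 hnodup).1 (List.mem_of_getLast? hlast)

theorem Blocked.of_subset (h : Blocked D Z p) (hsub : Z' ⊆ Z)
    (hint : ∀ x y z, InteriorAt p x y z → y ∈ Z → y ∈ Z') : Blocked D Z' p := by
  rcases h with ⟨x, y, z, hi, hcol, hy⟩ | ⟨x, y, z, hi, hcol, hy⟩
  · exact .inl ⟨x, y, z, hi, hcol, hint x y z hi hy⟩
  · exact .inr ⟨x, y, z, hi, hcol, fun d hd hdZ => hy d hd (hsub hdZ)⟩

/-- The triple of consecutive vertices `x`, `y`, `z` of a path does not block it given `Z`: if `y`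
is in `Z` it is a collider, and if it is a collider it has a descendant in `Z`. -/
def Active (D : V → V → Prop) (Z : Set V) (x y z : V) : Prop :=
  (y ∈ Z → D x y ∧ D z y) ∧ (D x y ∧ D z y → y ∈ anc D Z)

theorem not_blocked_iff : ¬ Blocked D Z p ↔ ∀ x y z, InteriorAt p x y z → Active D Z x y z := by
  constructor
  · refine fun h x y z hi => ⟨fun hy => ?_, fun hcol => ?_⟩
    · by_contra hcol
      exact h (.inl ⟨x, y, z, hi, hcol, hy⟩)
    · by_contra hy
      refine h (.inr ⟨x, y, z, hi, hcol, ?_⟩)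
      rintro d ⟨_, rfl, hyd⟩ hd
      exact hy ⟨d, hd, hyd⟩
  · rintro h (⟨x, y, z, hi, hcol, hy⟩ | ⟨x, y, z, hi, hcol, hy⟩)
    · exact hcol ((h x y z hi).1 hy)
    · obtain ⟨d, hd, hyd⟩ := (h x y z hi).2 hcol
      exact hy d ⟨y, rfl, hyd⟩ hd

theorem not_blocked_cons_cons : ¬ Blocked D Z (u :: v :: t) ↔
    (∀ z ∈ t.head?, Active D Z u v z) ∧ ¬ Blocked D Z (v :: t) := by
  simp only [not_blocked_iff, interiorAt_cons_cons]
  constructor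
  · exact fun h => ⟨fun z hz => h u v z (.inl ⟨rfl, rfl, hz⟩), fun x y z hi => h x y z (.inr hi)⟩
  · rintro ⟨huv, h⟩ x y z (⟨rfl, rfl, hz⟩ | hi)
    · exact huv z hz
    · exact h x y z hi

/-- `p` is a path from `u` to `w` in the skeleton of `D` that is not blocked by `Z`. -/
def OpenPath (D : V → V → Prop) (Z : Set V) (u w : V) (p : List V) : Prop :=
  IsPath (fun a b => D a b ∨ D b a) u w p ∧ ¬ Blocked D Z p

theorem openPath_singleton : OpenPath D Z v v [v] :=
  ⟨isPath_singleton, not_blocked_iff.2 fun x y z ⟨s, t, h⟩ => by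
    have hlen := congrArg List.length h
    simp only [List.length_append, List.length_cons, List.length_nil] at hlen
    omega⟩

theorem openPath_cons_cons : OpenPath D Z u w (u :: v :: t) ↔ (D u v ∨ D v u) ∧ u ∉ v :: t ∧
    (∀ z ∈ t.head?, Active D Z u v z) ∧ OpenPath D Z v w (v :: t) := by
  rw [OpenPath, OpenPath, isPath_cons_cons, not_blocked_cons_cons]
  tauto

theorem OpenPath.of_append (h : OpenPath D Z u w (s ++ v :: t)) : OpenPath D Z v w (v :: t) :=
  ⟨h.1.of_append, not_blocked_iff.2 fun x y z hi => not_blocked_iff.1 h.2 x y z hi.append_left⟩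

theorem OpenPath.exists_cons (h : OpenPath D Z v w (v :: t)) (huv : D u v ∨ D v u)
    (hact : ∀ z ∈ t.head?, Active D Z u v z) : ∃ t', OpenPath D Z u w (u :: t') := by
  by_cases hu : u ∈ v :: t
  · obtain ⟨s, t', hs⟩ := List.append_of_mem hu
    exact ⟨t', OpenPath.of_append (hs ▸ h)⟩
  · exact ⟨v :: t, openPath_cons_cons.2 ⟨huv, hu, hact, h⟩⟩

theorem OpenPath.mem_anc (h : OpenPath D Z u w p) (hu : u ∈ anc D W) (hw : w ∈ anc D W)
    (hZ : Z ⊆ anc D W) : ∀ x ∈ p, x ∈ anc D W := by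
  obtain ⟨hp, hopen⟩ := h
  suffices H : (∀ a, D a u → ¬ Blocked D Z (a :: p) → u ∈ anc D W) ∧
      (u ∈ anc D W → ∀ x ∈ p, x ∈ anc D W) from H.2 hu
  clear hu
  induction hp using IsPath.induction with
  | singleton => exact ⟨fun _ _ _ => hw, by simp⟩
  | @cons u v t _ _ huv ih =>
    obtain ⟨hforward, hrest⟩ := ih (not_blocked_cons_cons.1 hopen).2
    refine ⟨fun a hau ha => ?_, fun hu => List.forall_mem_cons.2 ⟨hu, hrest ?_⟩⟩
    · by_cases hvu : D v u
      · have hu : u ∈ anc D Z := ((not_blocked_cons_cons.1 ha).1 v rfl).2 ⟨hau, hvu⟩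
        exact anc_subset_anc hZ hu
      · have huv : D u v := huv.resolve_right hvu
        exact mem_anc_of_reflTransGen (.single huv) (hforward u huv hopen)
    · rcases huv with huv | hvu
      · exact hforward u huv hopen
      · exact mem_anc_of_reflTransGen (.single hvu) hu

theorem DSep.inter_anc (h : DSep D S T Z) (hS : S ⊆ anc D W) (hT : T ⊆ anc D W) :
    DSep D S T (Z ∩ anc D W) := by
  intro s hs t ht p hp
  by_contra hopen
  have hmem := OpenPath.mem_anc ⟨hp, hopen⟩ (hS hs) (hT ht) inter_subset_right
  exact hopen ((h s hs t ht p hp).of_subset inter_subset_left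
    fun x y z hi hy => ⟨hy, hmem y hi.mem⟩)

theorem DSep.sdiff_singleton (h : DSep D S {w} Z) : DSep D S {w} (Z \ {w}) := by
  rintro s hs _ rfl p hp
  exact (h s hs _ rfl p hp).of_subset sdiff_subset
    fun x y z hi hy => ⟨hy, hp.ne_of_interiorAt hi⟩

theorem moral_adj : (moral D W).Adj u v ↔
    u ≠ v ∧ u ∈ W ∧ v ∈ W ∧ (D u v ∨ D v u ∨ ∃ c ∈ W, D u c ∧ D v c) := by
  simp only [moral, SimpleGraph.fromRel_adj, and_comm (a := D v _)]
  tauto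

theorem IsPath.mem_of_moral (h : IsPath (moral D W).Adj u v p) (huv : u ≠ v) : u ∈ W ∧ v ∈ W :=
  let ⟨⟨_, hu⟩, ⟨_, hv⟩⟩ := h.exists_adj huv
  ⟨(moral_adj.1 hu).2.1, (moral_adj.1 hv).2.2.1⟩

theorem uSep_iff_not_reflTransGen {H : SimpleGraph V} : USep H S T W ↔
    ∀ s ∈ S, ∀ t ∈ T, s ∉ W → ¬ ReflTransGen (Within H.Adj Wᶜ) s t := by
  refine forall₄_congr fun s _ t _ => ?_
  rw [← not_and, ← mem_compl_iff, ← exists_isPath_iff_reflTransGen]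
  push Not
  refine forall₂_congr fun p _ => ?_
  simp only [mem_compl_iff, not_not, and_comm]

/-- `v` is joined by an open path to some vertex of `T`. -/
def Reaches (D : V → V → Prop) (Z T : Set V) (v : V) : Prop :=
  ∃ w ∈ T, ∃ t, OpenPath D Z v w (v :: t)

theorem dSep_iff_not_reaches : DSep D S T Z ↔ ∀ s ∈ S, ¬ Reaches D Z T s := by
  constructor
  · rintro h s hs ⟨w, hw, t, hst, hopen⟩
    exact hopen (h s hs w hw _ hst)
  · intro h s hs w hw p hp
    by_contra hopen
    obtain ⟨t, rfl⟩ := hp.exists_eq_cons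
    exact h s hs ⟨w, hw, t, hp, hopen⟩

variable [Std.Asymm D]

theorem active_of_parent_right (hy : y ∉ Z) (hyz : D y z) : Active D Z x y z :=
  ⟨fun h => absurd h hy, fun h => absurd h.2 (asymm hyz)⟩

theorem active_of_parent_left (hy : y ∉ Z) (hyx : D y x) : Active D Z x y z :=
  ⟨fun h => absurd h hy, fun h => absurd h.1 (asymm hyx)⟩

theorem OpenPath.notMem_of_parent (h : OpenPath D Z u w (u :: v :: t)) (hw : w ∉ Z)
    (hvu : D v u) : v ∉ Z := by
  cases t with
  | nil =>
    obtain rfl : v = w := by simpa using h.1.2.2.1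
    exact hw
  | cons z t =>
    intro hv
    exact asymm hvu (((openPath_cons_cons.1 h).2.2.1 z rfl).1 hv).1

theorem OpenPath.reflTransGen_moral (h : OpenPath D Z u w p) (hp : ∀ x ∈ p, x ∈ W)
    (hw : w ∉ Z) : ∀ x ∈ p, x ∉ Z → ReflTransGen (Within (moral D W).Adj Zᶜ) x w := by
  obtain ⟨hpath, hopen⟩ := h
  induction hpath using IsPath.induction with
  | singleton => simpa using fun _ => .refl
  | @cons u v t hut hvt huv ih =>
    obtain ⟨hu, hv⟩ := List.forall_mem_cons.1 hp
    obtain ⟨hact, hopen⟩ := not_blocked_cons_cons.1 hopen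
    have ih := ih hv hopen
    refine List.forall_mem_cons.2 ⟨fun huZ => ?_, ih⟩
    have hne : ∀ x ∈ v :: t, u ≠ x := fun x hx hux => (isPath_cons_cons.1 hut).2.1 (hux ▸ hx)
    by_cases hvZ : v ∈ Z
    · cases t with
      | nil =>
        obtain rfl : v = w := by simpa using hvt.2.2.1
        exact absurd hvZ hw
      | cons z t =>
        obtain ⟨huv, hzv⟩ : D u v ∧ D z v := (hact z rfl).1 hvZ
        have hzZ : z ∉ Z := OpenPath.notMem_of_parent ⟨hvt, hopen⟩ hw hzv
        have huz : (moral D W).Adj u z := moral_adj.2 ⟨hne z (by simp), hu, hv z (by simp),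
          .inr (.inr ⟨v, hv v (by simp), huv, hzv⟩)⟩
        exact .head ⟨huz, huZ, hzZ⟩ (ih z (by simp) hzZ)
    · have hadj : (moral D W).Adj u v :=
        moral_adj.2 ⟨hne v (by simp), hu, hv v (by simp), by tauto⟩
      exact .head ⟨hadj, huZ, hvZ⟩ (ih v (by simp) hvZ)

theorem OpenPath.exists_of_parent (h : OpenPath D Z v w (v :: t)) (hv : v ∉ Z) (hvu : D v u) :
    ∃ t', OpenPath D Z u w (u :: t') ∧ (u ∈ Z → ∀ z ∈ t'.head?, D z u) := by
  by_cases hu : u ∈ v :: t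
  · obtain ⟨s, t', hs⟩ := List.append_of_mem hu
    have hs0 : s ≠ [] := by
      rintro rfl
      obtain rfl : v = u := (List.cons.inj hs).1
      exact asymm hvu hvu
    rw [hs] at h
    refine ⟨t', h.of_append, fun huZ z hz => ?_⟩
    obtain ⟨x, hi⟩ := exists_interiorAt_append hs0 hz
    exact ((not_blocked_iff.1 h.2 x u z hi).1 huZ).2
  · refine ⟨v :: t, openPath_cons_cons.2 ⟨.inr hvu, hu, fun z _ =>
      active_of_parent_left hv hvu, h⟩, fun _ z hz => ?_⟩
    obtain rfl : v = z := by simpa using hz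
    exact hvu

theorem Reaches.of_reflTransGen (h : Reaches D Z T v) (hv : v ∉ anc D Z)
    (hvu : ReflTransGen D v u) : Reaches D Z T u := by
  induction hvu with
  | refl => exact h
  | tail hvb hbc ih =>
    obtain ⟨w, hw, t, ht⟩ := ih
    obtain ⟨t', ht', -⟩ := ht.exists_of_parent
      (fun hb => hv (mem_anc_of_reflTransGen hvb (subset_anc hb))) hbc
    exact ⟨w, hw, t', ht'⟩

theorem IsPath.openPath (h : IsPath D v w p) (hp : ∀ x ∈ p, x ∉ Z) : OpenPath D Z v w p := by
  refine ⟨⟨h.1.imp fun _ _ => .inl, h.2⟩, not_blocked_iff.2 fun x y z hi => ?_⟩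
  refine active_of_parent_right (hp y hi.mem) ?_
  obtain ⟨s, t, rfl⟩ := hi
  exact (List.isChain_cons_cons.1 (List.isChain_cons_cons.1 h.1.right_of_append).2).1

theorem exists_directed_openPath (hv : v ∉ anc D Z) (h : ReflTransGen D v w) :
    ∃ t, OpenPath D Z v w (v :: t) ∧ ∀ z ∈ t.head?, D v z := by
  have havoid : ReflTransGen (Within D (anc D Z)ᶜ) v w := by
    induction h with
    | refl => exact .refl
    | tail hvb hbc ih =>
      exact ih.tail ⟨hbc, fun hb => hv (mem_anc_of_reflTransGen hvb hb),
        fun hc => hv (mem_anc_of_reflTransGen (hvb.tail hbc) hc)⟩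
  obtain ⟨p, hp, hpZ⟩ := exists_isPath_iff_reflTransGen.2 ⟨hv, havoid⟩
  obtain ⟨t, rfl⟩ := hp.exists_eq_cons
  refine ⟨t, hp.openPath fun x hx hxZ => hpZ x hx (subset_anc hxZ), fun z hz => ?_⟩
  rw [List.eq_cons_of_mem_head? hz, isPath_cons_cons] at hp
  exact hp.1

theorem Reaches.of_adj (h : Reaches D Z T v) (hS : ∀ s ∈ S, ¬ Reaches D Z T s)
    (hv : v ∈ anc D (S ∪ T ∪ Z)) (hvZ : v ∉ Z) (huv : D u v ∨ D v u) : Reaches D Z T u := by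
  by_cases hvanc : v ∈ anc D Z
  · obtain ⟨w, hw, t, ht⟩ := h
    exact ⟨w, hw, ht.exists_cons huv fun z _ => ⟨fun h => absurd h hvZ, fun _ => hvanc⟩⟩
  · obtain ⟨a, (ha | ha) | ha, hva⟩ := hv
    · exact absurd (h.of_reflTransGen hvanc hva) (hS a ha)
    · obtain ⟨t, ht, hdir⟩ := exists_directed_openPath hvanc hva
      exact ⟨a, ha, ht.exists_cons huv fun z hz => active_of_parent_right hvZ (hdir z hz)⟩
    · exact absurd ⟨a, ha, hva⟩ hvanc

theorem Reaches.of_moral_adj (h : Reaches D Z T v) (hS : ∀ s ∈ S, ¬ Reaches D Z T s)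
    (hvZ : v ∉ Z) (huv : (moral D (anc D (S ∪ T ∪ Z))).Adj u v) : Reaches D Z T u := by
  obtain ⟨-, -, hv, huv | hvu | ⟨c, hc, huc, hvc⟩⟩ := moral_adj.1 huv
  · exact h.of_adj hS hv hvZ (.inl huv)
  · exact h.of_adj hS hv hvZ (.inr hvu)
  · obtain ⟨w, hw, t, ht⟩ := h
    obtain ⟨t', ht', hparent⟩ := ht.exists_of_parent hvZ hvc
    by_cases hcZ : c ∈ Z
    · exact ⟨w, hw, ht'.exists_cons (.inl huc) fun z hz =>
        ⟨fun _ => ⟨huc, hparent hcZ z hz⟩, fun _ => subset_anc hcZ⟩⟩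
    · exact Reaches.of_adj ⟨w, hw, t', ht'⟩ hS hc hcZ (.inl huc)

theorem dSep_iff_uSep_moral (hS : Disjoint S Z) (hT : Disjoint T Z) :
    DSep D S T Z ↔ USep (moral D (anc D (S ∪ T ∪ Z))) S T Z := by
  have hsub : S ∪ T ∪ Z ⊆ anc D (S ∪ T ∪ Z) := subset_anc
  rw [uSep_iff_not_reflTransGen]
  constructor
  · intro h s hs w hw hsZ hsw
    rw [dSep_iff_not_reaches] at h
    refine h s hs ?_
    clear hs hsZ
    induction hsw using ReflTransGen.head_induction_on with
    | refl => exact ⟨w, hw, [], openPath_singleton⟩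
    | head huv _ ih => exact ih.of_moral_adj h huv.2.2 huv.1
  · intro h s hs w hw p hp
    by_contra hopen
    have hpath : OpenPath D Z s w p := ⟨hp, hopen⟩
    have hmem := hpath.mem_anc (hsub (.inl (.inl hs))) (hsub (.inl (.inr hw)))
      (subset_union_right.trans hsub)
    have hsp : s ∈ p := List.mem_of_mem_head? hp.2.1
    have hsZ := hS.notMem_of_mem_left hs
    exact h s hs w hw hsZ (hpath.reflTransGen_moral hmem (hT.notMem_of_mem_left hw) s hsp hsZ)

end OpenPath

section Marginal

variable {V : Type*} {H H' : SimpleGraph V} {I L S T Z : Set V} {A Y u v : V}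

theorem fromRel_congr {r r' : V → V → Prop} (h : ∀ u v, u ≠ v → (r u v ↔ r' u v)) :
    SimpleGraph.fromRel r = SimpleGraph.fromRel r' := by
  ext u v
  exact and_congr_right fun huv => or_congr (h u v huv) (h v u huv.symm)

theorem fromRel_sup_fromRel (r r' : V → V → Prop) : SimpleGraph.fromRel r ⊔ SimpleGraph.fromRel r' =
    SimpleGraph.fromRel fun u v => r u v ∨ r' u v := by
  ext u v
  simp only [SimpleGraph.sup_adj, SimpleGraph.fromRel_adj]
  tauto

/-- The graph obtained from `H` by projecting out the vertices of `I`: two vertices outside `I` are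
adjacent when some path of `H` joins them through `I`. -/
def marginal (H : SimpleGraph V) (I : Set V) : SimpleGraph V :=
  SimpleGraph.fromRel fun u v => u ∉ I ∧ v ∉ I ∧
    ∃ p, IsPath H.Adj u v p ∧ ∀ x ∈ p, x ≠ u → x ≠ v → x ∈ I

/-- The graph obtained from `H` by joining `A` and `Y` to every vertex of `L`. -/
def augment (H : SimpleGraph V) (A Y : V) (L : Set V) : SimpleGraph V :=
  H ⊔ SimpleGraph.fromRel fun u v => (u = A ∨ u = Y) ∧ v ∈ L

theorem marginal_adj_of_reflTransGen (huv : u ≠ v) (hu : u ∉ I) (hv : v ∉ I)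
    (h : ReflTransGen (Within H.Adj (I ∪ {u, v})) u v) : (marginal H I).Adj u v := by
  obtain ⟨p, hp, hpI⟩ := exists_isPath_iff_reflTransGen.2 ⟨by simp, h⟩
  refine ⟨huv, .inl ⟨hu, hv, p, hp, fun x hx hxu hxv => ?_⟩⟩
  exact (hpI x hx).resolve_right (by simp [hxu, hxv])

instance stdSymm_within (H : SimpleGraph V) (S : Set V) : Std.Symm (Within H.Adj S) :=
  ⟨fun _ _ h => ⟨h.1.symm, h.2.2, h.2.1⟩⟩

theorem reflTransGen_of_marginal_adj (hZI : Disjoint Z I) (h : Within (marginal H I).Adj Zᶜ u v) :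
    ReflTransGen (Within H.Adj Zᶜ) u v := by
  have hjoin : ∀ {a b p}, a ∉ Z → b ∉ Z → IsPath H.Adj a b p →
      (∀ x ∈ p, x ≠ a → x ≠ b → x ∈ I) → ReflTransGen (Within H.Adj Zᶜ) a b := by
    intro a b p ha hb hp hpI
    refine (exists_isPath_iff_reflTransGen (P := Zᶜ).1 ⟨p, hp, fun x hx hxZ => ?_⟩).2
    refine hZI.notMem_of_mem_left hxZ (hpI x hx ?_ ?_)
    · exact fun hxa => ha (hxa ▸ hxZ)
    · exact fun hxb => hb (hxb ▸ hxZ)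
  obtain ⟨⟨-, ⟨-, -, p, hp, hpI⟩ | ⟨-, -, p, hp, hpI⟩⟩, hu, hv⟩ := h
  · exact hjoin hu hv hp hpI
  · exact symm (hjoin hv hu hp hpI)

theorem exists_reflTransGen_marginal (hu : u ∉ I) (huZ : u ∉ Z)
    (h : ReflTransGen (Within H.Adj Zᶜ) u v) :
    ∃ a, a ∉ I ∧ a ∉ Z ∧ ReflTransGen (Within (marginal H I).Adj Zᶜ) u a ∧
      v ∈ I ∪ {a} ∧ ReflTransGen (Within H.Adj (I ∪ {a})) a v := by
  induction h with
  | refl => exact ⟨u, hu, huZ, .refl, by simp, .refl⟩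
  | @tail b c _ hbc ih =>
    obtain ⟨a, haI, haZ, hua, hb, hab⟩ := ih
    by_cases hc : c ∈ I ∪ {a}
    · exact ⟨a, haI, haZ, hua, hc, hab.tail ⟨hbc.1, hb, hc⟩⟩
    · obtain ⟨hcI, hca⟩ : c ∉ I ∧ c ≠ a := not_or.1 hc
      have hac : ReflTransGen (Within H.Adj (I ∪ {a, c})) a c := by
        have hsub : I ∪ {a} ⊆ I ∪ {a, c} := union_subset_union_right I (by simp)
        exact (ReflTransGen.mono (fun _ _ => Within.mono hsub) _ _ hab).tail
          ⟨hbc.1, hsub hb, by simp⟩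
      exact ⟨c, hcI, hbc.2.2, hua.tail
        ⟨marginal_adj_of_reflTransGen hca.symm haI hcI hac, haZ, hbc.2.2⟩, by simp, .refl⟩

theorem uSep_marginal_iff (hS : Disjoint S I) (hT : Disjoint T I) (hZ : Disjoint Z I) :
    USep (marginal H I) S T Z ↔ USep H S T Z := by
  simp only [uSep_iff_not_reflTransGen]
  refine forall₅_congr fun s hs t ht hsZ => not_congr ⟨fun h => ?_, fun h => ?_⟩
  · exact ReflTransGen.lift' id (fun _ _ => reflTransGen_of_marginal_adj hZ) _ _ h
  · obtain ⟨a, -, -, hsa, hta, -⟩ :=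
      exists_reflTransGen_marginal (hS.notMem_of_mem_left hs) hsZ h
    obtain rfl : t = a := hta.resolve_left (hT.notMem_of_mem_left ht)
    exact hsa

theorem isCut_iff {Vs : Set V} :
    IsCut Vs H A Y Z ↔ Z ⊆ Vs \ {A, Y} ∧ USep H {A} {Y} Z := by
  rw [subset_sdiff, disjoint_iff_inter_eq_empty, and_assoc]
  simp only [IsCut, USep, mem_singleton_iff, forall_eq]

theorem USep.anti (hle : H ≤ H') (h : USep H' S T Z) : USep H S T Z :=
  fun s hs t ht p hp => h s hs t ht p ⟨hp.1.imp fun _ _ hab => hle hab, hp.2⟩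

theorem within_of_within_augment (hLZ : L ⊆ Z) (h : Within (augment H A Y L).Adj Zᶜ u v) :
    Within H.Adj Zᶜ u v := by
  obtain ⟨hH | ⟨-, ⟨-, hv⟩ | ⟨-, hu⟩⟩, huZ, hvZ⟩ := h
  · exact ⟨hH, huZ, hvZ⟩
  · exact absurd (hLZ hv) hvZ
  · exact absurd (hLZ hu) huZ

theorem uSep_augment_iff (hAL : A ∉ L) (hYL : Y ∉ L) (hAZ : A ∉ Z) (hYZ : Y ∉ Z) :
    USep (augment H A Y L) {A} {Y} Z ↔ L ⊆ Z ∧ USep H {A} {Y} Z := by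
  constructor
  · refine fun h => ⟨fun l hl => ?_, h.anti le_sup_left⟩
    by_contra hlZ
    have hAl : (augment H A Y L).Adj A l :=
      .inr ⟨fun h => hAL (h ▸ hl), .inl ⟨.inl rfl, hl⟩⟩
    have hlY : (augment H A Y L).Adj l Y :=
      .inr ⟨fun h => hYL (h ▸ hl), .inr ⟨.inr rfl, hl⟩⟩
    exact uSep_iff_not_reflTransGen.1 h A rfl Y rfl hAZ
      (.head ⟨hAl, hAZ, hlZ⟩ (.single ⟨hlY, hlZ, hYZ⟩))
  · rw [uSep_iff_not_reflTransGen, uSep_iff_not_reflTransGen]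
    rintro ⟨hLZ, h⟩ s hs t ht hsZ hst
    exact h s hs t ht hsZ (ReflTransGen.mono (fun _ _ => within_of_within_augment hLZ) _ _ hst)

end Marginal

theorem minimum_iff_of_inter {V : Type*} {P Q : Set V → Prop} {W Z : Set V}
    (hQ : ∀ Z, Q Z ↔ P Z ∧ Z ⊆ W) (hinter : ∀ Z, P Z → P (Z ∩ W)) (hfin : ∀ Z, P Z → Z.Finite) :
    (P Z ∧ ∀ Z', P Z' → Z.ncard ≤ Z'.ncard) ↔ (Q Z ∧ ∀ Z', Q Z' → Z.ncard ≤ Z'.ncard) := by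
  constructor
  · rintro ⟨hZ, hmin⟩
    have hle : Z.ncard ≤ (Z ∩ W).ncard := hmin _ (hinter Z hZ)
    have hZW : Z ∩ W = Z := eq_of_subset_of_ncard_le inter_subset_left hle (hfin Z hZ)
    exact ⟨(hQ Z).2 ⟨hZ, inter_eq_left.1 hZW⟩, fun Z' hZ' => hmin Z' ((hQ Z').1 hZ').1⟩
  · rintro ⟨hZ, hmin⟩
    refine ⟨((hQ Z).1 hZ).1, fun Z' hZ' => ?_⟩
    calc Z.ncard ≤ (Z' ∩ W).ncard := hmin _ ((hQ _).2 ⟨hinter Z' hZ', inter_subset_right⟩)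
      _ ≤ Z'.ncard := ncard_le_ncard inter_subset_left (hfin Z' hZ')

section Adjustment

variable {V : Type*} {D : V → V → Prop} {A Y : V} {L N S Z : Set V}

theorem Acyclic.asymm (h : Acyclic D) : Std.Asymm D :=
  ⟨fun u v huv hvu => h u v huv (.single hvu)⟩

instance asymm_pbd [Std.Asymm D] : Std.Asymm (pbd D A Y) :=
  ⟨fun _ _ huv hvu => asymm huv.1 hvu.1⟩

theorem mem_forb : A ∈ forb D A Y :=
  .inr rfl

theorem forb_subset_desc : forb D A Y ⊆ desc D {A} := by
  rintro v (⟨c, ⟨-, hAc, -⟩, hcv⟩ | rfl)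
  · exact ⟨A, rfl, hAc.trans hcv⟩
  · exact ⟨v, rfl, .refl⟩

theorem anc_pbd (hA : A ∈ S) : anc (pbd D A Y) S = anc D S := by
  refine Subset.antisymm ?_ ?_
  · rintro u ⟨v, hv, huv⟩
    exact ⟨v, hv, ReflTransGen.mono (fun _ _ h => h.1) _ _ huv⟩
  · rintro u ⟨v, hv, huv⟩
    induction huv using ReflTransGen.head_induction_on with
    | refl => exact subset_anc hv
    | @head a b hab _ ih =>
      by_cases ha : a = A
      · exact subset_anc (ha ▸ hA)
      · exact mem_anc_of_reflTransGen (.single ⟨hab, fun h => ha h.1⟩) ih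

theorem dSep_pbd_iff_uSep_H0 [Std.Asymm D] (hLZ : L ⊆ Z) (hZ : Z ⊆ ancAYL D A Y L) (hA : A ∉ Z)
    (hY : Y ∉ Z) : DSep (pbd D A Y) {A} {Y} Z ↔ USep (H0 D A Y L) {A} {Y} Z := by
  have hanc : anc (pbd D A Y) ({A} ∪ {Y} ∪ Z) = ancAYL D A Y L := by
    rw [anc_pbd (by simp), ancAYL, insert_eq]
    refine Subset.antisymm (anc_subset_anc (union_subset ?_ hZ)) (anc_subset_anc ?_)
    · exact subset_union_left.trans subset_anc
    · exact (union_subset_union_right _ hLZ).trans subset_anc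
  rw [dSep_iff_uSep_moral (disjoint_singleton_left.2 hA) (disjoint_singleton_left.2 hY), hanc, H0]

theorem H1verts_sdiff :
    H1verts D A Y L N \ {A, Y} = (ancAYL D A Y L \ {Y}) ∩ (N \ forb D A Y) := by
  ext v
  have hA : v = A → v ∈ forb D A Y := fun h => h ▸ mem_forb
  simp only [H1verts, Ignore, mem_sdiff, mem_inter_iff, mem_union, mem_insert_iff,
    mem_singleton_iff, mem_univ]
  tauto

theorem H1_eq_augment_marginal (hL : L ⊆ H1verts D A Y L N) :
    H1 D A Y L N = augment (marginal (H0 D A Y L) (Ignore D A Y L N)) A Y L := by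
  have hA : A ∈ H1verts D A Y L N := ⟨subset_anc (by simp), fun h => h.1.2 (by simp)⟩
  have hY : Y ∈ H1verts D A Y L N := ⟨subset_anc (by simp), fun h => h.1.2 (by simp)⟩
  rw [augment, marginal, fromRel_sup_fromRel]
  refine fromRel_congr fun u v huv => ?_
  constructor
  · rintro ⟨hu, hv, hp | ⟨huA, hvL⟩ | ⟨huY, hvL⟩⟩
    · exact .inl ⟨hu.2, hv.2, hp⟩
    · exact .inr ⟨.inl huA, hvL⟩
    · exact .inr ⟨.inr huY, hvL⟩
  · rintro (⟨hu, hv, p, hp, hpI⟩ | ⟨rfl | rfl, hv⟩)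
    · obtain ⟨huW, hvW⟩ := hp.mem_of_moral huv
      exact ⟨⟨huW, hu⟩, ⟨hvW, hv⟩, .inl ⟨p, hp, hpI⟩⟩
    · exact ⟨hA, hL hv, .inr (.inl ⟨rfl, hv⟩)⟩
    · exact ⟨hY, hL hv, .inr (.inr ⟨rfl, hv⟩)⟩

theorem isCut_H1_iff [Std.Asymm D] (hLforb : Disjoint L (forb D A Y)) (hLY : Y ∉ L) (hLN : L ⊆ N) :
    IsCut (H1verts D A Y L N) (H1 D A Y L N) A Y Z ↔
      GAC D A Y L N Z ∧ Z ⊆ ancAYL D A Y L \ {Y} := by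
  have hL : L ⊆ H1verts D A Y L N \ {A, Y} := by
    have hanc : L ⊆ ancAYL D A Y L := subset_union_right.trans subset_anc
    rw [H1verts_sdiff]
    exact subset_inter (subset_sdiff_singleton hanc hLY) (subset_sdiff.2 ⟨hLN, hLforb⟩)
  rw [isCut_iff, H1_eq_augment_marginal (hL.trans sdiff_subset)]
  have hcut : Z ⊆ H1verts D A Y L N \ {A, Y} →
      (USep (augment (marginal (H0 D A Y L) (Ignore D A Y L N)) A Y L) {A} {Y} Z ↔
        L ⊆ Z ∧ DSep (pbd D A Y) {A} {Y} Z) := by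
    intro hZ
    have hAI : A ∉ Ignore D A Y L N := fun h => h.1.2 (by simp)
    have hYI : Y ∉ Ignore D A Y L N := fun h => h.1.2 (by simp)
    have hAZ : A ∉ Z := fun h => (hZ h).2 (by simp)
    have hYZ : Y ∉ Z := fun h => (hZ h).2 (by simp)
    have hZI : Disjoint Z (Ignore D A Y L N) := disjoint_left.2 fun z hz => (hZ hz).1.2
    rw [uSep_augment_iff (fun h => (hL h).2 (by simp)) hLY hAZ hYZ,
      uSep_marginal_iff (disjoint_singleton_left.2 hAI) (disjoint_singleton_left.2 hYI) hZI]
    exact and_congr_right fun hLZ =>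
      (dSep_pbd_iff_uSep_H0 hLZ (fun z hz => (hZ hz).1.1) hAZ hYZ).symm
  rw [and_congr_right hcut, H1verts_sdiff, subset_inter_iff, subset_sdiff (t := N),
    disjoint_iff_inter_eq_empty, GAC]
  tauto

theorem GAC.inter_ancAYL (h : GAC D A Y L N Z) (hLY : Y ∉ L) :
    GAC D A Y L N (Z ∩ (ancAYL D A Y L \ {Y})) := by
  obtain ⟨hsep, hforb, hLZ, hZN⟩ := h
  have hanc : anc (pbd D A Y) ({A, Y} ∪ L) = ancAYL D A Y L := anc_pbd (by simp)
  have hLanc : L ⊆ ancAYL D A Y L := subset_union_right.trans subset_anc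
  refine ⟨?_, ?_, subset_inter hLZ (subset_sdiff_singleton hLanc hLY),
    inter_subset_left.trans hZN⟩
  · rw [← hanc, ← inter_sdiff_assoc]
    exact (hsep.inter_anc (singleton_subset_iff.2 (subset_anc (by simp)))
      (singleton_subset_iff.2 (subset_anc (by simp)))).sdiff_singleton
  · exact subset_empty_iff.1 ((inter_subset_inter_left _ inter_subset_left).trans hforb.le)

end Adjustment

theorem stmt5_general {V : Type*} (D : V → V → Prop) [Std.Asymm D] (A Y : V) (L N : Set V)
    (hLforb : Disjoint L (forb D A Y)) (hLY : Y ∉ L) (hLN : L ⊆ N) (hN : N.Finite) (Z : Set V) :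
    MinimumGAC D A Y L N Z ↔ MinimumCut (H1verts D A Y L N) (H1 D A Y L N) A Y Z :=
  minimum_iff_of_inter (fun _ => isCut_H1_iff hLforb hLY hLN) (fun _ hZ => hZ.inter_ancAYL hLY)
    fun _ hZ => hN.subset hZ.2.2.2

/-- Part 4 of Lemma 5 (statement 5): `Z` is a minimum set satisfying the graphical
adjustment criterion iff `Z` is a minimum `A`–`Y` cut in `H¹`. -/
theorem stmt5 {V : Type*} [Fintype V] [DecidableEq V]
    (D : V → V → Prop) (hacy : Acyclic D)
    (A Y : V) (L N : Set V)
    (hAY : A ≠ Y) (hAancY : Relation.ReflTransGen D A Y)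
    (hLnd : L ∩ desc D {A} = ∅) (hLY : Y ∉ L)
    (hN : {A, Y} ∪ L ⊆ N)
    (Z : Set V) :
    MinimumGAC D A Y L N Z ↔ MinimumCut (H1verts D A Y L N) (H1 D A Y L N) A Y Z :=
  have := hacy.asymm
  have hLforb : Disjoint L (forb D A Y) :=
    (disjoint_iff_inter_eq_empty.2 hLnd).mono_right forb_subset_desc
  stmt5_general D A Y L N hLforb hLY (subset_union_right.trans hN) N.toFinite Z

end CausalGraph
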